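/- If λ is a maximal element in the standard immersion poset on partitions of n with at least two parts, then λ_1 > λ_2 (the first part of λ is strictly greater than the second part). -/

import Mathlib

open Finset MvPolynomial

/-- A partition of `n`, represented as a weakly decreasing list of positive
integers summing to `n`. -/
def IsPartitionOf (n : ℕ) (l : List ℕ) : Prop :=
  l.Pairwise (· ≥ ·) ∧ (∀ x ∈ l, 0 < x) ∧ l.sum = n

/-- `T : ℕ → ℕ → ℕ` is a semistandard Young tableau of shape `l`
(rows weakly increase, columns strictly increase, entries are `0` outside
of the diagram; entries are 0-indexed, so entry value `k` stands for the
letter `k+1`). -/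
def IsSSYT (l : List ℕ) (T : ℕ → ℕ → ℕ) : Prop :=
  (∀ i j1 j2, j1 ≤ j2 → j2 < l.getD i 0 → T i j1 ≤ T i j2) ∧
  (∀ i1 i2 j, i1 < i2 → j < l.getD i2 0 → T i1 j < T i2 j) ∧
  (∀ i j, l.getD i 0 ≤ j → T i j = 0)

/-- The tableau `T` of shape `l` has content `ν`: for every `k`, the number of
cells of the diagram of `l` whose entry is `k` equals the `(k+1)`-st part of `ν`. -/
def HasContent (l : List ℕ) (T : ℕ → ℕ → ℕ) (ν : List ℕ) : Prop :=
  ∀ k, Nat.card {c : ℕ × ℕ // c.2 < l.getD c.1 0 ∧ T c.1 c.2 = k} = ν.getD k 0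

/-- The Kostka number `K_{l,ν}`: the number of semistandard Young tableaux of
shape `l` and content `ν`. -/
noncomputable def kostka (l ν : List ℕ) : ℕ :=
  Nat.card {T : ℕ → ℕ → ℕ // IsSSYT l T ∧ HasContent l T ν}

/-- `f^λ`, the number of standard Young tableaux of shape `l`. -/
noncomputable def fSYT (l : List ℕ) : ℕ := kostka l (List.replicate l.sum 1)

/-- Dominance order: all partial sums of `l` are at most those of `m`. -/
def DomLE (l m : List ℕ) : Prop := ∀ k, (l.take k).sum ≤ (m.take k).sum

/-- The standard immersion order: dominance together with `f^λ ≤ f^μ`. -/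
def StdLE (l m : List ℕ) : Prop := DomLE l m ∧ fSYT l ≤ fSYT m

/-- Strict standard immersion order. -/
def StdLT (l m : List ℕ) : Prop := StdLE l m ∧ l ≠ m

/-- `m` covers `l` in the standard immersion poset on partitions of `n`. -/
def StdCovBy (n : ℕ) (l m : List ℕ) : Prop :=
  StdLT l m ∧ ∀ ν, IsPartitionOf n ν → StdLT l ν → ¬ StdLT ν m

/-- `l` is a maximal element of the standard immersion poset on partitions of `n`. -/
def StdMaximal (n : ℕ) (l : List ℕ) : Prop :=
  ∀ m, IsPartitionOf n m → m ≠ l → ¬ StdLE l m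

/-- The immersion order on partitions of `n`: `l ≤_I m` iff
`K_{l,α} ≤ K_{m,α}` for every partition `α` of `n`. -/
def ImmersionLE (n : ℕ) (l m : List ℕ) : Prop :=
  ∀ ν, IsPartitionOf n ν → kostka l ν ≤ kostka m ν

/-- Strict immersion order. -/
def ImmersionLT (n : ℕ) (l m : List ℕ) : Prop := ImmersionLE n l m ∧ l ≠ m

/-- `m` covers `l` in the immersion poset on partitions of `n`. -/
def ImmersionCovBy (n : ℕ) (l m : List ℕ) : Prop :=
  ImmersionLT n l m ∧ ∀ ν, IsPartitionOf n ν → ImmersionLT n l ν → ¬ ImmersionLT n ν m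

theorem take_sum_eq (l : List ℕ) (k : ℕ) :
    (l.take k).sum = ∑ i ∈ Finset.range k, l.getD i 0 := by
  induction l generalizing k with
  | nil => simp
  | cons x t ih =>
    cases k with
    | zero => simp
    | succ k => simp [Finset.sum_range_succ', ih, add_comm]

theorem getD_zero_of_large (l : List ℕ) (i : ℕ) (h : l.length ≤ i) : l.getD i 0 = 0 := by
  simp [List.getD, h]

theorem getD_le_sum (l : List ℕ) (i : ℕ) : l.getD i 0 ≤ l.sum := by
  induction l generalizing i with
  | nil => simp
  | cons x t ih =>
    cases i with
    | zero => simp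
    | succ i => simp only [List.getD_cons_succ, List.sum_cons]; exact (ih i).trans (by omega)

theorem cells_finite (l : List ℕ) : {c : ℕ × ℕ | c.2 < l.getD c.1 0}.Finite := by
  apply ((Set.finite_Iio l.length).prod (Set.finite_Iio (l.sum))).subset
  rintro ⟨i, j⟩ h
  simp only [Set.mem_ofPred_eq] at h
  refine ⟨?_, ?_⟩
  · by_contra h'
    rw [getD_zero_of_large l i (by simpa using h')] at h
    omega
  · exact lt_of_lt_of_le h (getD_le_sum l i)

theorem entry_lt (l ν : List ℕ) (T : ℕ → ℕ → ℕ) (hc : HasContent l T ν) (i j : ℕ)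
    (h : j < l.getD i 0) : T i j < ν.length := by
  by_contra h'
  have h1 := hc (T i j)
  rw [getD_zero_of_large ν _ (by omega)] at h1
  have hf : Finite {c : ℕ × ℕ // c.2 < l.getD c.1 0 ∧ T c.1 c.2 = T i j} :=
    ((cells_finite l).subset (fun c hc => hc.1) :
      {c : ℕ × ℕ | c.2 < l.getD c.1 0 ∧ T c.1 c.2 = T i j}.Finite)
  have := Finite.card_eq_zero_iff.mp h1
  exact this.false ⟨(i, j), h, rfl⟩

theorem ssyt_finite (l ν : List ℕ) :
    Finite {T : ℕ → ℕ → ℕ // IsSSYT l T ∧ HasContent l T ν} := by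
  have hC : Finite {c : ℕ × ℕ // c.2 < l.getD c.1 0} := cells_finite l
  let F : {T : ℕ → ℕ → ℕ // IsSSYT l T ∧ HasContent l T ν} →
      ({c : ℕ × ℕ // c.2 < l.getD c.1 0} → Fin ν.length) :=
    fun T c => ⟨T.1 c.1.1 c.1.2, entry_lt l ν T.1 T.2.2 _ _ c.2⟩
  apply Finite.of_injective F
  intro T T' h
  apply Subtype.ext
  funext i j
  by_cases hij : j < l.getD i 0
  · have := congrFun h ⟨(i, j), hij⟩
    simpa [F] using this
  · rw [T.2.1.2.2 i j (by omega), T'.2.1.2.2 i j (by omega)]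

/-- Moving the corner cell `(k+1, a-1)` to `(0, a)` does not decrease the number of SYT. -/
theorem kostka_le (l μ ν : List ℕ) (a k : ℕ) (ha : 0 < a)
    (h0 : l.getD 0 0 = a) (hk : l.getD (k+1) 0 = a) (hle : ∀ i, l.getD i 0 ≤ a)
    (hlt : ∀ i, k + 1 < i → l.getD i 0 < a)
    (hμ : ∀ i, μ.getD i 0 = if i = 0 then a + 1 else if i = k + 1 then a - 1 else l.getD i 0) :
    kostka l ν ≤ kostka μ ν := by
  have := ssyt_finite μ ν
  let σ : Equiv.Perm (ℕ × ℕ) := Equiv.swap (0, a) (k+1, a-1)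
  have s1 : σ (0, a) = (k+1, a-1) := Equiv.swap_apply_left _ _
  have s2 : σ (k+1, a-1) = (0, a) := Equiv.swap_apply_right _ _
  have s3 : ∀ i j, ¬ (i = 0 ∧ j = a) → ¬ (i = k+1 ∧ j = a-1) → σ (i, j) = (i, j) := by
    intro i j h h'
    apply Equiv.swap_apply_of_ne_of_ne
    · simpa using h
    · simpa using h'
  have cell : ∀ c : ℕ × ℕ, c.2 < μ.getD c.1 0 ↔ (σ c).2 < l.getD (σ c).1 0 := by
    rintro ⟨i, j⟩
    by_cases h1 : i = 0 ∧ j = a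
    · obtain ⟨rfl, rfl⟩ := h1
      rw [s1, hμ]; simp only [hk]; simp; omega
    by_cases h2 : i = k+1 ∧ j = a-1
    · obtain ⟨rfl, rfl⟩ := h2
      rw [s2, hμ]; simp only [h0]; simp
    rw [s3 i j h1 h2, hμ]
    dsimp only
    split_ifs with e e'
    · subst e; rw [h0]; omega
    · subst e'; rw [hk]; omega
    · rfl
  have key : ∀ T : ℕ → ℕ → ℕ, IsSSYT l T ∧ HasContent l T ν →
      IsSSYT μ (fun i j => T (σ (i, j)).1 (σ (i, j)).2) ∧
      HasContent μ (fun i j => T (σ (i, j)).1 (σ (i, j)).2) ν := by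
    rintro T ⟨⟨hr, hc, hz⟩, hT⟩
    refine ⟨⟨?_, ?_, ?_⟩, ?_⟩
    · intro i j1 j2 h12 h2
      dsimp only
      by_cases e : i = 0 ∧ j2 = a
      · obtain ⟨rfl, rfl⟩ := e
        rcases h12.eq_or_lt with rfl | h12
        · exact le_rfl
        rw [s1, s3 0 j1 (by omega) (by omega)]
        have q1 := hr 0 j1 (j2 - 1) (by omega) (by omega)
        have q2 := hc 0 (k+1) (j2 - 1) (by omega) (by omega)
        exact q1.trans q2.le
      · have hm := hμ i
        have hj2 : j2 < l.getD i 0 ∧ ¬ (i = k+1 ∧ j2 ≥ a-1) := by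
          rw [hm] at h2
          split_ifs at h2 with e1 e2
          · subst e1; omega
          · subst e2; omega
          · exact ⟨h2, by omega⟩
        have := hle i
        rw [s3 i j1 (by omega) (by omega), s3 i j2 (by omega) (by omega)]
        exact hr i j1 j2 h12 hj2.1
    · intro i1 i2 j hi hj
      dsimp only
      have hm := hμ i2
      have hj2 : j < l.getD i2 0 ∧ ¬ (i2 = k+1 ∧ j ≥ a-1) := by
        rw [hm] at hj
        split_ifs at hj with e1 e2
        · omega
        · subst e2; omega
        · exact ⟨hj, by omega⟩
      have := hle i2
      have h3 := hlt i2
      rw [s3 i2 j (by omega) (by omega), s3 i1 j (by omega) (by omega)]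
      exact hc i1 i2 j hi hj2.1
    · intro i j hij
      have := cell (i, j)
      dsimp only at this ⊢
      exact hz _ _ (by omega)
    · intro v
      rw [← hT v]
      exact Nat.card_congr (σ.subtypeEquiv (fun c => by rw [cell c]))
  refine Nat.card_le_card_of_injective
    (fun T => (⟨_, key T.1 T.2⟩ : {T : ℕ → ℕ → ℕ // IsSSYT μ T ∧ HasContent μ T ν})) ?_
  intro T T' h
  apply Subtype.ext
  funext i j
  have h' := congrArg Subtype.val h
  have := congrFun (congrFun h' (σ.symm (i, j)).1) (σ.symm (i, j)).2
  simpa using this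

theorem decomp (a : ℕ) (t : List ℕ) (hs : t.Pairwise (· ≥ ·)) (hle : ∀ x ∈ t, x ≤ a) :
    ∃ k r, t = List.replicate k a ++ r ∧ ∀ x ∈ r, x < a := by
  induction t with
  | nil => exact ⟨0, [], by simp, by simp⟩
  | cons x t ih =>
    rw [List.pairwise_cons] at hs
    rcases (hle x (by simp)).eq_or_lt with rfl | hx
    · obtain ⟨k, r, h, h'⟩ := ih hs.2 (fun y hy => hle y (by simp [hy]))
      exact ⟨k+1, r, by simp [List.replicate_succ, ← h], h'⟩
    · refine ⟨0, x :: t, by simp, ?_⟩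
      intro y hy
      rcases List.mem_cons.mp hy with rfl | hy
      · exact hx
      · exact lt_of_le_of_lt (hs.1 y hy) hx

theorem sum_eq_take (l : List ℕ) (N : ℕ) (h : l.length ≤ N) :
    l.sum = ∑ i ∈ Finset.range N, l.getD i 0 := by
  rw [← take_sum_eq, List.take_of_length_le h]

theorem getD_form (a b k i : ℕ) (r : List ℕ) (c : ℕ) :
    (b :: (List.replicate k a ++ c :: r)).getD i 0 =
      if i = 0 then b else if i < k + 1 then a else if i = k + 1 then c
        else r.getD (i - (k + 2)) 0 := by
  cases i with
  | zero => simp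
  | succ i =>
    rw [List.getD_cons_succ]
    rcases lt_trichotomy i k with h | h | h
    · rw [List.getD_append _ _ _ _ (by simpa using h)]
      simp [h, List.getD]
    · subst h
      rw [List.getD_append_right _ _ _ _ (by simp)]
      simp
    · rw [List.getD_append_right _ _ _ _ (by simp; omega)]
      obtain ⟨d, rfl⟩ := Nat.exists_eq_add_of_lt h
      have e : k + d + 1 - k = d + 1 := by omega
      have e' : k + d + 1 + 1 - (k + 2) = d := by omega
      simp only [List.length_replicate, e, e', List.getD_cons_succ]
      rw [if_neg (by omega), if_neg (by omega), if_neg (by omega)]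

/-- A maximal element of the standard immersion poset on partitions
of `n` with at least two parts has strictly larger first part than second part. -/
theorem std_maximal_first_part_strict (n : ℕ) (l : List ℕ) (hl : IsPartitionOf n l)
    (hlen : 2 ≤ l.length) (hmax : StdMaximal n l) :
    l.getD 1 0 < l.getD 0 0 := by
  by_contra hcon
  obtain ⟨hs, hpos, hsum⟩ := hl
  match l, hlen with
  | a :: b :: t, _ =>
  have hab : a = b := by
    have := (List.pairwise_cons.mp hs).1 b (by simp)
    simp at hcon
    omega
  subst hab
  obtain ⟨k, r, hr, hra⟩ := decomp a t (List.pairwise_cons.mp (List.pairwise_cons.mp hs).2).2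
    (fun x hx => (List.pairwise_cons.mp hs).1 x (by simp [hx]))
  have hl' : a :: a :: t = a :: (List.replicate k a ++ a :: r) := by
    rw [hr]
    congr 1
    rw [← List.cons_append, ← List.replicate_succ, List.replicate_succ']
    simp
  have ha : 0 < a := hpos a (by simp)
  rw [hl'] at hs hpos hsum hmax
  clear hcon hl' hr
  set l := a :: (List.replicate k a ++ a :: r) with hldef
  have hlg := fun i => getD_form a a k i r a
  rw [← hldef] at hlg
  have hrlt : ∀ i, r.getD i 0 < a := by
    intro i
    by_cases h : i < r.length
    · rw [List.getD_eq_getElem _ _ h]; exact hra _ (List.getElem_mem h)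
    · rw [getD_zero_of_large r i (by omega)]; exact ha
  -- the partition obtained by moving the corner cell up to the first row
  obtain ⟨μ, hμs, hμpos, hμ⟩ : ∃ μ : List ℕ, μ.Pairwise (· ≥ ·) ∧ (∀ x ∈ μ, 0 < x) ∧
      ∀ i, μ.getD i 0 = if i = 0 then a + 1 else if i = k + 1 then a - 1 else l.getD i 0 := by
    by_cases h1 : a = 1
    · subst h1
      have hrn : r = [] := by
        rw [List.eq_nil_iff_forall_not_mem]
        intro x hx
        have h1 := hra x hx
        have h2 := hpos x (by simp [hldef, hx])
        omega
      subst hrn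
      refine ⟨2 :: List.replicate k 1, ?_, ?_, ?_⟩
      · simp [List.pairwise_cons, List.pairwise_replicate]
      · simp
      · intro i
        rw [hlg]
        cases i with
        | zero => simp
        | succ i =>
          rw [List.getD_cons_succ]
          by_cases h : i < k
          · simp [List.getD, h]; omega
          · rw [getD_zero_of_large _ _ (by simpa using h)]
            simp [h]
    · refine ⟨(a+1) :: (List.replicate k a ++ (a-1) :: r), ?_, ?_, ?_⟩
      · simp only [hldef, List.pairwise_cons, List.pairwise_append, List.mem_append,
          List.mem_replicate, List.mem_cons] at hs ⊢
        refine ⟨?_, hs.2.1, ⟨?_, hs.2.2.1.2⟩, ?_⟩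
        · rintro x (⟨-, rfl⟩ | rfl | hx)
          · omega
          · omega
          · have := hra x hx; omega
        · intro x hx; have := hra x hx; omega
        · rintro x ⟨-, rfl⟩ y (rfl | hy)
          · omega
          · exact (hra y hy).le
      · simp only [List.mem_append, List.mem_replicate, List.mem_cons]
        rintro x (rfl | ⟨-, rfl⟩ | rfl | hx)
        · omega
        · omega
        · omega
        · exact hpos x (by simp [hldef, hx])
      · intro i
        rw [hlg, getD_form]
        split_ifs <;> first | rfl | omega
  have hl0 : l.getD 0 0 = a := by rw [hlg]; simp
  have hlk : l.getD (k+1) 0 = a := by rw [hlg]; simp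
  have hps : ∀ j, (∑ i ∈ Finset.range j, μ.getD i 0) + (if k + 1 < j then 1 else 0) =
      (∑ i ∈ Finset.range j, l.getD i 0) + (if 0 < j then 1 else 0) := by
    intro j
    induction j with
    | zero => simp
    | succ j ih =>
      rw [Finset.sum_range_succ, Finset.sum_range_succ, hμ j]
      by_cases e0 : j = 0
      · subst e0; rw [hl0]; simp
      by_cases e1 : j = k + 1
      · subst e1
        simp only [hlk]
        simp at ih ⊢
        omega
      · rw [if_neg e0, if_neg e1]
        have : (k + 1 < j + 1) ↔ k + 1 < j := by omega
        simp only [this]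
        have e2 : 0 < j := by omega
        have e3 : 0 < j + 1 := by omega
        simp only [e2, e3, if_true] at ih ⊢
        omega
  have hsumeq : μ.sum = l.sum := by
    have := hps (k + 2 + μ.length + l.length)
    rw [← sum_eq_take _ _ (by omega), ← sum_eq_take _ _ (by omega), if_pos (by omega),
      if_pos (by omega)] at this
    omega
  refine hmax μ ⟨hμs, hμpos, by rw [hsumeq, hsum]⟩ ?_ ⟨?_, ?_⟩
  · intro h
    have := hμ 0
    rw [h, hl0] at this
    simp at this
  · intro j
    rw [take_sum_eq, take_sum_eq]
    have := hps j
    split_ifs at this <;> omega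
  · unfold fSYT
    rw [hsumeq]
    refine kostka_le l μ _ a k ha hl0 hlk ?_ ?_ hμ
    · intro i
      rw [hlg]
      have := hrlt (i - (k + 2))
      split_ifs <;> omega
    · intro i hi
      rw [hlg, if_neg (by omega), if_neg (by omega), if_neg (by omega)]
      exact hrlt _
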